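/- For each time t = 0,…,T: (1) there exists a function c̃_t^1 such that E^g[c_t(X_t, U_t^1, U_t^2) | M_t^1, U_t^1, U_t^2] = c̃_t^1(Π_t^1, U_t^1, U_t^2) at every realization of positive probability; explicitly c̃_t^1(π, u¹, u²) = Σ_{x ∈ 𝒳_t} c_t(x, u¹, u²)·π(x); and (2) there exists a function c̃_t^2 such that E^g[c̃_t^1(Π_t^1, U_t^1, U_t^2) | M_t^2, Γ_t^{[2,1]}, U_t^2] = c̃_t^2(Π_t^2, Γ_t^{[2,1]}, U_t^2) at every realization of positive probability. -/

import Mathlib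

/-!
Common framework: a two-agent sequential dynamic team with nested information
structure (Dave & Malikopoulos, "Structural results for decentralized
stochastic control with a nested information structure").

* `X t` : state space at time `t`; `U1 t`, `U2 t` : action spaces of agents 1 and 2;
* `W t` : disturbance; `V1 t`, `V2 t` : measurement noises; `Y1 t`, `Y2 t` : observations.
* Dynamics `X_{t+1} = f t X_t U¹_t U²_t W_t`, observations `Y^k_t = h^k t X_t V^k_t`.
* Memories `M²_t = (Y²_{0:t}, U²_{0:t-1})`, `L_t^{[1,2]} = (Y¹_{0:t}, U¹_{0:t-1})`,
  `M¹_t = (L_t^{[1,2]}, M²_t)` (nested information).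
* The primitive random variables are independent with given PMFs; the sample
  space for horizon `T` is `ΩT`, with the product mass function `mass`.
-/

open scoped Classical
open Finset

namespace NestedTeam

noncomputable section

/-- Memory of agent 2 at time `t`: observations `Y²₀,…,Y²ₜ` and actions `U²₀,…,U²ₜ₋₁`. -/
abbrev M2 (Y2 U2 : ℕ → Type) (t : ℕ) : Type :=
  ((s : Fin (t + 1)) → Y2 s) × ((s : Fin t) → U2 s)

/-- The private information `L_t^{[1,2]} = M¹_t \ M²_t` of agent 1. -/
abbrev Lp (Y1 U1 : ℕ → Type) (t : ℕ) : Type :=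
  ((s : Fin (t + 1)) → Y1 s) × ((s : Fin t) → U1 s)

/-- Memory of agent 1 at time `t` (nested information: it contains `M²_t`). -/
abbrev M1 (Y1 Y2 U1 U2 : ℕ → Type) (t : ℕ) : Type :=
  Lp Y1 U1 t × M2 Y2 U2 t

/-- The system: dynamics, observation maps and per-stage cost. -/
structure Sys (X U1 U2 W V1 V2 Y1 Y2 : ℕ → Type) where
  f : ∀ t, X t → U1 t → U2 t → W t → X (t + 1)
  h1 : ∀ t, X t → V1 t → Y1 t
  h2 : ∀ t, X t → V2 t → Y2 t
  c : ∀ t, X t → U1 t → U2 t → ℝ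

/-- A control strategy profile: `U¹_t = g1 t M¹_t`, `U²_t = g2 t M²_t`. -/
structure Strat (U1 U2 Y1 Y2 : ℕ → Type) where
  g1 : ∀ t, M1 Y1 Y2 U1 U2 t → U1 t
  g2 : ∀ t, M2 Y2 U2 t → U2 t

/-- A realization of the primitive random variables. -/
structure Prim (X W V1 V2 : ℕ → Type) where
  x0 : X 0
  w : ∀ t, W t
  v1 : ∀ t, V1 t
  v2 : ∀ t, V2 t

variable {X U1 U2 W V1 V2 Y1 Y2 : ℕ → Type}

/-- The closed-loop trajectory: states `X_{0:t}` and actions `U^{1:2}_{0:t-1}`. -/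
def hist (S : Sys X U1 U2 W V1 V2 Y1 Y2) (g : Strat U1 U2 Y1 Y2) (ρ : Prim X W V1 V2) :
    (t : ℕ) → ((s : Fin (t + 1)) → X s) × ((s : Fin t) → U1 s × U2 s)
  | 0 => (Fin.cons (α := fun s : Fin 1 => X s) ρ.x0 (fun i => i.elim0), fun i => i.elim0)
  | t + 1 =>
    let p := hist S g ρ t
    let y1 : (s : Fin (t + 1)) → Y1 s := fun s => S.h1 s (p.1 s) (ρ.v1 s)
    let y2 : (s : Fin (t + 1)) → Y2 s := fun s => S.h2 s (p.1 s) (ρ.v2 s)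
    let m1 : M1 Y1 Y2 U1 U2 t := ((y1, fun s => (p.2 s).1), (y2, fun s => (p.2 s).2))
    let a1 := g.g1 t m1
    let a2 := g.g2 t m1.2
    (Fin.snoc (α := fun s : Fin (t + 2) => X s) p.1 (S.f t (p.1 (Fin.last t)) a1 a2 (ρ.w t)),
     Fin.snoc (α := fun s : Fin (t + 1) => U1 s × U2 s) p.2 (a1, a2))

/-- State `X_t` along the closed loop. -/
def xTraj (S : Sys X U1 U2 W V1 V2 Y1 Y2) (g : Strat U1 U2 Y1 Y2) (ρ : Prim X W V1 V2)
    (t : ℕ) : X t := (hist S g ρ t).1 (Fin.last t)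

/-- `L_t^{[1,2]} = (Y¹_{0:t}, U¹_{0:t-1})` along the closed loop. -/
def lpTraj (S : Sys X U1 U2 W V1 V2 Y1 Y2) (g : Strat U1 U2 Y1 Y2) (ρ : Prim X W V1 V2)
    (t : ℕ) : Lp Y1 U1 t :=
  (fun s => S.h1 s ((hist S g ρ t).1 s) (ρ.v1 s), fun s => ((hist S g ρ t).2 s).1)

/-- `M²_t = (Y²_{0:t}, U²_{0:t-1})` along the closed loop. -/
def m2Traj (S : Sys X U1 U2 W V1 V2 Y1 Y2) (g : Strat U1 U2 Y1 Y2) (ρ : Prim X W V1 V2)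
    (t : ℕ) : M2 Y2 U2 t :=
  (fun s => S.h2 s ((hist S g ρ t).1 s) (ρ.v2 s), fun s => ((hist S g ρ t).2 s).2)

/-- `M¹_t` along the closed loop. -/
def m1Traj (S : Sys X U1 U2 W V1 V2 Y1 Y2) (g : Strat U1 U2 Y1 Y2) (ρ : Prim X W V1 V2)
    (t : ℕ) : M1 Y1 Y2 U1 U2 t := (lpTraj S g ρ t, m2Traj S g ρ t)

/-- Action `U¹_t` along the closed loop. -/
def u1Traj (S : Sys X U1 U2 W V1 V2 Y1 Y2) (g : Strat U1 U2 Y1 Y2) (ρ : Prim X W V1 V2)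
    (t : ℕ) : U1 t := g.g1 t (m1Traj S g ρ t)

/-- Action `U²_t` along the closed loop. -/
def u2Traj (S : Sys X U1 U2 W V1 V2 Y1 Y2) (g : Strat U1 U2 Y1 Y2) (ρ : Prim X W V1 V2)
    (t : ℕ) : U2 t := g.g2 t (m2Traj S g ρ t)

/-- Observation `Y¹_t` along the closed loop. -/
def y1Traj (S : Sys X U1 U2 W V1 V2 Y1 Y2) (g : Strat U1 U2 Y1 Y2) (ρ : Prim X W V1 V2)
    (t : ℕ) : Y1 t := S.h1 t (xTraj S g ρ t) (ρ.v1 t)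

/-- Observation `Y²_t` along the closed loop. -/
def y2Traj (S : Sys X U1 U2 W V1 V2 Y1 Y2) (g : Strat U1 U2 Y1 Y2) (ρ : Prim X W V1 V2)
    (t : ℕ) : Y2 t := S.h2 t (xTraj S g ρ t) (ρ.v2 t)

/-- New information `Z¹_{t+1} = (Y¹_{t+1}, U¹_t, Y²_{t+1}, U²_t)` of agent 1. -/
def z1Traj (S : Sys X U1 U2 W V1 V2 Y1 Y2) (g : Strat U1 U2 Y1 Y2) (ρ : Prim X W V1 V2)
    (t : ℕ) : Y1 (t + 1) × U1 t × Y2 (t + 1) × U2 t :=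
  (y1Traj S g ρ (t + 1), u1Traj S g ρ t, y2Traj S g ρ (t + 1), u2Traj S g ρ t)

/-- New information `Z²_{t+1} = (Y²_{t+1}, U²_t)` of agent 2. -/
def z2Traj (S : Sys X U1 U2 W V1 V2 Y1 Y2) (g : Strat U1 U2 Y1 Y2) (ρ : Prim X W V1 V2)
    (t : ℕ) : Y2 (t + 1) × U2 t := (y2Traj S g ρ (t + 1), u2Traj S g ρ t)

/-- Sample space of primitive random variables for horizon `T`. -/
abbrev ΩT (X W V1 V2 : ℕ → Type) (T : ℕ) : Type :=
  X 0 × ((t : Fin (T + 1)) → W t) × ((t : Fin (T + 1)) → V1 t) × ((t : Fin (T + 1)) → V2 t)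

/-- Extend a finite-horizon family to all times (by junk beyond the horizon). -/
def ext {α : ℕ → Type} [∀ t, Inhabited (α t)] (T : ℕ) (a : (t : Fin (T + 1)) → α t)
    (t : ℕ) : α t := if h : t < T + 1 then a ⟨t, h⟩ else default

/-- The primitive realization corresponding to a sample point. -/
def toPrim [∀ t, Inhabited (W t)] [∀ t, Inhabited (V1 t)] [∀ t, Inhabited (V2 t)]
    (T : ℕ) (ω : ΩT X W V1 V2 T) : Prim X W V1 V2 :=
  ⟨ω.1, ext T ω.2.1, ext T ω.2.2.1, ext T ω.2.2.2⟩

/-- The (known) probability mass functions of the mutually independent primitive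
random variables. -/
structure PrimPMF (X W V1 V2 : ℕ → Type) [Fintype (X 0)] [∀ t, Fintype (W t)]
    [∀ t, Fintype (V1 t)] [∀ t, Fintype (V2 t)] where
  pX0 : X 0 → ℝ
  pW : ∀ t, W t → ℝ
  pV1 : ∀ t, V1 t → ℝ
  pV2 : ∀ t, V2 t → ℝ
  pX0_nonneg : ∀ x, 0 ≤ pX0 x
  pX0_sum : ∑ x, pX0 x = 1
  pW_nonneg : ∀ t w, 0 ≤ pW t w
  pW_sum : ∀ t, ∑ w, pW t w = 1
  pV1_nonneg : ∀ t v, 0 ≤ pV1 t v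
  pV1_sum : ∀ t, ∑ v, pV1 t v = 1
  pV2_nonneg : ∀ t v, 0 ≤ pV2 t v
  pV2_sum : ∀ t, ∑ v, pV2 t v = 1

variable [Fintype (X 0)] [∀ t, Fintype (W t)] [∀ t, Fintype (V1 t)] [∀ t, Fintype (V2 t)]
variable [∀ t, Inhabited (W t)] [∀ t, Inhabited (V1 t)] [∀ t, Inhabited (V2 t)]

/-- Product mass of a sample point (independent primitives). -/
def mass (P : PrimPMF X W V1 V2) (T : ℕ) (ω : ΩT X W V1 V2 T) : ℝ :=
  P.pX0 ω.1 * (∏ t : Fin (T + 1), P.pW t (ω.2.1 t)) *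
    (∏ t : Fin (T + 1), P.pV1 t (ω.2.2.1 t)) * (∏ t : Fin (T + 1), P.pV2 t (ω.2.2.2 t))

/-- Elementary conditional probability `P(A | B)` on a finite sample space. -/
def condProb {Ω : Type*} [Fintype Ω] (P : Ω → ℝ) (A B : Ω → Prop) : ℝ :=
  (∑ ω, if A ω ∧ B ω then P ω else 0) / (∑ ω, if B ω then P ω else 0)

/-- Elementary conditional expectation `E[F | B]` on a finite sample space. -/
def condExp {Ω : Type*} [Fintype Ω] (P : Ω → ℝ) (F : Ω → ℝ) (B : Ω → Prop) : ℝ :=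
  (∑ ω, if B ω then P ω * F ω else 0) / (∑ ω, if B ω then P ω else 0)

/-- Agent 1's information state `Π¹_t = P(X_t = · | M¹_t)` at the realization `ω`. -/
def infoState1 (S : Sys X U1 U2 W V1 V2 Y1 Y2) (g : Strat U1 U2 Y1 Y2)
    (P : PrimPMF X W V1 V2) (T : ℕ) (ω : ΩT X W V1 V2 T) (t : ℕ) : X t → ℝ :=
  fun x => condProb (mass P T)
    (fun ω' => xTraj S g (toPrim T ω') t = x)
    (fun ω' => m1Traj S g (toPrim T ω') t = m1Traj S g (toPrim T ω) t)

/-- Agent 2's information state `Π²_t = P((X_t, L_t^{[1,2]}) = · | M²_t)` at `ω`. -/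
def infoState2 (S : Sys X U1 U2 W V1 V2 Y1 Y2) (g : Strat U1 U2 Y1 Y2)
    (P : PrimPMF X W V1 V2) (T : ℕ) (ω : ΩT X W V1 V2 T) (t : ℕ) :
    X t × Lp Y1 U1 t → ℝ :=
  fun sl => condProb (mass P T)
    (fun ω' => (xTraj S g (toPrim T ω') t, lpTraj S g (toPrim T ω') t) = sl)
    (fun ω' => m2Traj S g (toPrim T ω') t = m2Traj S g (toPrim T ω) t)

/-- Per-stage cost along the closed loop. -/
def stageCost (S : Sys X U1 U2 W V1 V2 Y1 Y2) (g : Strat U1 U2 Y1 Y2) (ρ : Prim X W V1 V2)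
    (t : ℕ) : ℝ := S.c t (xTraj S g ρ t) (u1Traj S g ρ t) (u2Traj S g ρ t)

/-- Expected cost-to-go `𝒥_{t₀}(g) = E[Σ_{t=t₀}^T c_t(X_t,U¹_t,U²_t)]`. -/
def costToGo (S : Sys X U1 U2 W V1 V2 Y1 Y2) (g : Strat U1 U2 Y1 Y2)
    (P : PrimPMF X W V1 V2) (T t0 : ℕ) : ℝ :=
  ∑ ω : ΩT X W V1 V2 T, mass P T ω * ∑ t ∈ Finset.Icc t0 T, stageCost S g (toPrim T ω) t

/-- Expected total cost `𝒥(g) = E[Σ_{t=0}^T c_t(X_t,U¹_t,U²_t)]`. -/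
def totalCost (S : Sys X U1 U2 W V1 V2 Y1 Y2) (g : Strat U1 U2 Y1 Y2)
    (P : PrimPMF X W V1 V2) (T : ℕ) : ℝ := costToGo S g P T 0

/-- `(g, ψ²)` is a compatible control/prescription pair: agent 1's action is
generated by the prescription `Γ_t^{[2,1]} = ψ_t(M²_t)` applied to `Π¹_t`. -/
def Compat (S : Sys X U1 U2 W V1 V2 Y1 Y2) (g : Strat U1 U2 Y1 Y2)
    (ψ : ∀ t, M2 Y2 U2 t → (X t → ℝ) → U1 t) (P : PrimPMF X W V1 V2) (T : ℕ) : Prop :=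
  ∀ t, t ≤ T → ∀ ω : ΩT X W V1 V2 T, 0 < mass P T ω →
    u1Traj S g (toPrim T ω) t =
      ψ t (m2Traj S g (toPrim T ω) t) (infoState1 S g P T ω t)

/-- The map `e_t` of Lemma 4: conditioning a joint distribution on
`𝒳_t × 𝓛_t^{[1,2]}` on its second component. -/
def eMap [∀ t, Fintype (X t)] (t : ℕ) (π2 : X t × Lp Y1 U1 t → ℝ) (l : Lp Y1 U1 t) :
    X t → ℝ := fun x => π2 (x, l) / ∑ x', π2 (x', l)

section FiniteProbability

variable {Ω α : Type*} [Fintype Ω] {p : Ω → ℝ}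

lemma sum_ite_pos (hp : ∀ ω, 0 ≤ p ω) {B : Ω → Prop} {ω : Ω} (hB : B ω) (hω : 0 < p ω) :
    0 < ∑ ω', if B ω' then p ω' else 0 := by
  refine Finset.sum_pos' (fun ω' _ => ?_) ⟨ω, mem_univ ω, by rwa [if_pos hB]⟩
  split_ifs
  exacts [hp ω', le_rfl]

lemma condExp_congr {F G : Ω → ℝ} {B C : Ω → Prop} (hBC : ∀ ω, B ω ↔ C ω)
    (hFG : ∀ ω, C ω → p ω ≠ 0 → F ω = G ω) : condExp p F B = condExp p G C := by
  obtain rfl : B = C := funext fun ω => propext (hBC ω)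
  have hterm (ω : Ω) : (if B ω then p ω * F ω else 0) = if B ω then p ω * G ω else 0 := by
    by_cases hp : p ω = 0
    · simp only [hp, zero_mul]
    · exact ite_congr rfl (fun hB => by rw [hFG ω hB hp]) fun _ => rfl
  simp only [condExp, hterm]

lemma condExp_comp_eq_finsum (p : Ω → ℝ) (G : α → ℝ) (a : Ω → α) (B : Ω → Prop) :
    condExp p (fun ω => G (a ω)) B = ∑ᶠ x, G x * condProb p (fun ω => a ω = x) B := by
  have hsupp : (Function.support fun x => G x * condProb p (fun ω => a ω = x) B) ⊆
      (univ.image a : Finset α) := by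
    refine Function.support_subset_iff'.mpr fun x hx => ?_
    have hne (ω : Ω) : a ω ≠ x := fun h => hx (by simp [← h])
    simp [condProb, hne]
  have hfiber (x : α) : (∑ ω with a ω = x, if B ω then p ω * G (a ω) else 0) =
      G x * ∑ ω, if a ω = x ∧ B ω then p ω else 0 := by
    rw [sum_filter, mul_sum]
    refine sum_congr rfl fun ω _ => ?_
    by_cases hx : a ω = x <;> by_cases hB : B ω <;> simp [hx, hB, mul_comm]
  rw [finsum_eq_sum_of_support_subset _ hsupp, condExp,
    ← sum_fiberwise_of_maps_to (t := univ.image a) fun ω _ => mem_image_of_mem a (mem_univ ω),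
    sum_div]
  exact sum_congr rfl fun x _ => by rw [hfiber, condProb, mul_div_assoc]

lemma condExp_comp_eq_sum [Fintype α] (p : Ω → ℝ) (G : α → ℝ) (a : Ω → α) (B : Ω → Prop) :
    condExp p (fun ω => G (a ω)) B = ∑ x, G x * condProb p (fun ω => a ω = x) B := by
  rw [condExp_comp_eq_finsum, finsum_eq_sum_of_fintype]

lemma sum_condProb_eq_and [Fintype α] (p : Ω → ℝ) (a : Ω → α) (A B : Ω → Prop) :
    ∑ x, condProb p (fun ω => a ω = x ∧ A ω) B = condProb p A B := by
  simp only [condProb, ← sum_div, and_assoc, ite_and (_ = _)]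
  rw [sum_comm]
  simp only [sum_ite_eq, mem_univ, if_true]

lemma condProb_and_right {A B C : Ω → Prop} (hC : (∑ ω, if C ω then p ω else 0) ≠ 0) :
    condProb p A (fun ω => B ω ∧ C ω) =
      condProb p (fun ω => A ω ∧ B ω) C / condProb p B C := by
  rw [condProb, condProb, condProb, div_div_div_cancel_right₀ hC]
  simp only [and_assoc]
  -- Only the decidability instances still differ.
  congr!

end FiniteProbability

omit [∀ t, Inhabited (W t)] [∀ t, Inhabited (V1 t)] [∀ t, Inhabited (V2 t)] in
lemma mass_nonneg (P : PrimPMF X W V1 V2) (T : ℕ) (ω : ΩT X W V1 V2 T) : 0 ≤ mass P T ω :=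
  mul_nonneg (mul_nonneg (mul_nonneg (P.pX0_nonneg _) (prod_nonneg fun t _ => P.pW_nonneg t _))
    (prod_nonneg fun t _ => P.pV1_nonneg t _)) (prod_nonneg fun t _ => P.pV2_nonneg t _)

/-- The function `c̃¹_t` of the paper: the cost of the actions `(u¹, u²)` averaged over the
distribution `π` of the state. -/
def condCost1 (S : Sys X U1 U2 W V1 V2 Y1 Y2) (t : ℕ) [Fintype (X t)] (π : X t → ℝ)
    (u1 : U1 t) (u2 : U2 t) : ℝ :=
  ∑ x, S.c t x u1 u2 * π x

/-- The function `c̃²_t` of the paper: under the prescription `γ`, agent 1 with private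
information `l` plays `γ (eMap t π l)`, and the resulting `c̃¹_t` is averaged over the
`l`-marginal of `π`. The sum over `l` is a `finsum`, so that observation and action spaces may
be infinite; the information states of agent 2 have finite support in `l`. -/
def condCost2 [∀ t, Fintype (X t)] (S : Sys X U1 U2 W V1 V2 Y1 Y2) (t : ℕ)
    (π : X t × Lp Y1 U1 t → ℝ) (γ : (X t → ℝ) → U1 t) (u2 : U2 t) : ℝ :=
  ∑ᶠ l, condCost1 S t (eMap t π l) (γ (eMap t π l)) u2 * ∑ x, π (x, l)

lemma condExp_stageCost_eq_condCost1 (S : Sys X U1 U2 W V1 V2 Y1 Y2) (g : Strat U1 U2 Y1 Y2)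
    (P : PrimPMF X W V1 V2) (T : ℕ) (ω : ΩT X W V1 V2 T) (t : ℕ) [Fintype (X t)] :
    condExp (mass P T) (fun ω' => stageCost S g (toPrim T ω') t)
        (fun ω' => m1Traj S g (toPrim T ω') t = m1Traj S g (toPrim T ω) t ∧
          u1Traj S g (toPrim T ω') t = u1Traj S g (toPrim T ω) t ∧
          u2Traj S g (toPrim T ω') t = u2Traj S g (toPrim T ω) t) =
      condCost1 S t (infoState1 S g P T ω t) (u1Traj S g (toPrim T ω) t)
        (u2Traj S g (toPrim T ω) t) := by
  have hu (ω' : ΩT X W V1 V2 T)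
      (hm : m1Traj S g (toPrim T ω') t = m1Traj S g (toPrim T ω) t) :
      u1Traj S g (toPrim T ω') t = u1Traj S g (toPrim T ω) t ∧
        u2Traj S g (toPrim T ω') t = u2Traj S g (toPrim T ω) t :=
    ⟨congrArg (g.g1 t) hm, congrArg (g.g2 t) (congrArg Prod.snd hm)⟩
  calc
    _ = condExp (mass P T)
          (fun ω' => S.c t (xTraj S g (toPrim T ω') t) (u1Traj S g (toPrim T ω) t)
            (u2Traj S g (toPrim T ω) t))
          (fun ω' => m1Traj S g (toPrim T ω') t = m1Traj S g (toPrim T ω) t) :=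
      condExp_congr (fun ω' => and_iff_left_of_imp (hu ω')) fun ω' hm _ => by
        rw [stageCost, (hu ω' hm).1, (hu ω' hm).2]
    _ = _ := condExp_comp_eq_sum _
      (fun x => S.c t x (u1Traj S g (toPrim T ω) t) (u2Traj S g (toPrim T ω) t)) _ _

lemma sum_infoState2 (S : Sys X U1 U2 W V1 V2 Y1 Y2) (g : Strat U1 U2 Y1 Y2)
    (P : PrimPMF X W V1 V2) (T : ℕ) (ω : ΩT X W V1 V2 T) (t : ℕ) [Fintype (X t)]
    (l : Lp Y1 U1 t) :
    ∑ x, infoState2 S g P T ω t (x, l) =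
      condProb (mass P T) (fun ω' => lpTraj S g (toPrim T ω') t = l)
        (fun ω' => m2Traj S g (toPrim T ω') t = m2Traj S g (toPrim T ω) t) := by
  simp only [infoState2, Prod.mk.injEq (xTraj _ _ _ _), sum_condProb_eq_and]

section FiniteStates

variable [∀ t, Fintype (X t)]

omit [Fintype (X 0)] in
lemma infoState1_eq_eMap (S : Sys X U1 U2 W V1 V2 Y1 Y2) (g : Strat U1 U2 Y1 Y2)
    (P : PrimPMF X W V1 V2) (T : ℕ) {ω : ΩT X W V1 V2 T} (hω : 0 < mass P T ω) (t : ℕ) :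
    infoState1 S g P T ω t =
      eMap t (infoState2 S g P T ω t) (lpTraj S g (toPrim T ω) t) := by
  funext x
  rw [eMap, sum_infoState2]
  simp only [infoState1, infoState2, m1Traj, Prod.mk.injEq]
  refine condProb_and_right (sum_ite_pos (mass_nonneg P T) (ω := ω) ?_ hω).ne'
  rfl

omit [Fintype (X 0)] in
lemma condExp_condCost1_eq_condCost2 (S : Sys X U1 U2 W V1 V2 Y1 Y2) (g : Strat U1 U2 Y1 Y2)
    (P : PrimPMF X W V1 V2) {T t : ℕ} {ψ : M2 Y2 U2 t → (X t → ℝ) → U1 t}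
    (hψ : ∀ ω : ΩT X W V1 V2 T, 0 < mass P T ω →
      u1Traj S g (toPrim T ω) t = ψ (m2Traj S g (toPrim T ω) t) (infoState1 S g P T ω t))
    (ω : ΩT X W V1 V2 T) :
    condExp (mass P T)
        (fun ω' => condCost1 S t (infoState1 S g P T ω' t) (u1Traj S g (toPrim T ω') t)
          (u2Traj S g (toPrim T ω') t))
        (fun ω' => m2Traj S g (toPrim T ω') t = m2Traj S g (toPrim T ω) t ∧
          ψ (m2Traj S g (toPrim T ω') t) = ψ (m2Traj S g (toPrim T ω) t) ∧
          u2Traj S g (toPrim T ω') t = u2Traj S g (toPrim T ω) t) =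
      condCost2 S t (infoState2 S g P T ω t) (ψ (m2Traj S g (toPrim T ω) t))
        (u2Traj S g (toPrim T ω) t) := by
  -- Given `M²_t`, the state `Π¹_t` depends only on `L_t^{[1,2]}`, through the map `e_t`, so that
  -- private information is the only randomness left in the cost.
  set γ := ψ (m2Traj S g (toPrim T ω) t)
  set u2 := u2Traj S g (toPrim T ω) t
  set π1 := eMap t (infoState2 S g P T ω t)
  have hu2 (ω' : ΩT X W V1 V2 T)
      (hm : m2Traj S g (toPrim T ω') t = m2Traj S g (toPrim T ω) t) :
      u2Traj S g (toPrim T ω') t = u2 := congrArg (g.g2 t) hm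
  have hπ1 (ω' : ΩT X W V1 V2 T)
      (hm : m2Traj S g (toPrim T ω') t = m2Traj S g (toPrim T ω) t) (hω' : 0 < mass P T ω') :
      infoState1 S g P T ω' t = π1 (lpTraj S g (toPrim T ω') t) := by
    have hπ2 : infoState2 S g P T ω' t = infoState2 S g P T ω t := by
      unfold infoState2
      rw [hm]
    rw [infoState1_eq_eMap S g P T hω', hπ2]
  calc
    _ = condExp (mass P T)
          (fun ω' => condCost1 S t (π1 (lpTraj S g (toPrim T ω') t))
            (γ (π1 (lpTraj S g (toPrim T ω') t))) u2)
          (fun ω' => m2Traj S g (toPrim T ω') t = m2Traj S g (toPrim T ω) t) :=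
      condExp_congr
        (fun ω' => and_iff_left_of_imp fun hm => ⟨congrArg ψ hm, hu2 ω' hm⟩)
        fun ω' hm hne => by
          have hω' : 0 < mass P T ω' := (mass_nonneg P T ω').lt_of_ne' hne
          rw [hψ ω' hω', hu2 ω' hm, hm, hπ1 ω' hm hω']
    _ = ∑ᶠ l, condCost1 S t (π1 l) (γ (π1 l)) u2 *
          condProb (mass P T) (fun ω' => lpTraj S g (toPrim T ω') t = l)
            (fun ω' => m2Traj S g (toPrim T ω') t = m2Traj S g (toPrim T ω) t) :=
      condExp_comp_eq_finsum _ (fun l => condCost1 S t (π1 l) (γ (π1 l)) u2) _ _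
    _ = condCost2 S t (infoState2 S g P T ω t) γ u2 := by
      simp only [condCost2, sum_infoState2, π1]

omit [Fintype (X 0)] in
theorem conditional_costs_general (T : ℕ) (S : Sys X U1 U2 W V1 V2 Y1 Y2)
    (P : PrimPMF X W V1 V2) (g : Strat U1 U2 Y1 Y2) (ψ : ∀ t, M2 Y2 U2 t → (X t → ℝ) → U1 t)
    (hcompat : Compat S g ψ P T) :
    ∀ t, t ≤ T → ∀ ω : ΩT X W V1 V2 T, 0 < mass P T ω →
      condExp (mass P T) (fun ω' => stageCost S g (toPrim T ω') t)
          (fun ω' => m1Traj S g (toPrim T ω') t = m1Traj S g (toPrim T ω) t ∧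
            u1Traj S g (toPrim T ω') t = u1Traj S g (toPrim T ω) t ∧
            u2Traj S g (toPrim T ω') t = u2Traj S g (toPrim T ω) t) =
        condCost1 S t (infoState1 S g P T ω t) (u1Traj S g (toPrim T ω) t)
          (u2Traj S g (toPrim T ω) t) ∧
      condExp (mass P T)
          (fun ω' => condCost1 S t (infoState1 S g P T ω' t) (u1Traj S g (toPrim T ω') t)
            (u2Traj S g (toPrim T ω') t))
          (fun ω' => m2Traj S g (toPrim T ω') t = m2Traj S g (toPrim T ω) t ∧
            ψ t (m2Traj S g (toPrim T ω') t) = ψ t (m2Traj S g (toPrim T ω) t) ∧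
            u2Traj S g (toPrim T ω') t = u2Traj S g (toPrim T ω) t) =
        condCost2 S t (infoState2 S g P T ω t) (ψ t (m2Traj S g (toPrim T ω) t))
          (u2Traj S g (toPrim T ω) t) :=
  fun t ht ω _ => ⟨condExp_stageCost_eq_condCost1 S g P T ω t,
    condExp_condCost1_eq_condCost2 S g P (hcompat t ht) ω⟩

end FiniteStates

/-- Lemma 7 of the paper. (1) At every realization of positive
probability, `E[c_t(X_t,U¹_t,U²_t) | M¹_t, U¹_t, U²_t] = c̃¹_t(Π¹_t,U¹_t,U²_t)`
with the explicit `c̃¹_t(π,u¹,u²) = Σ_x c_t(x,u¹,u²)·π(x)`; and (2) there is a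
function `c̃²_t` with
`E[c̃¹_t(Π¹_t,U¹_t,U²_t) | M²_t, Γ_t^{[2,1]}, U²_t] = c̃²_t(Π²_t,Γ_t^{[2,1]},U²_t)`
at every realization of positive probability. -/
theorem conditional_costs
    [∀ t, Fintype (X t)] [∀ t, Fintype (U1 t)] [∀ t, Fintype (U2 t)]
    [∀ t, Fintype (Y1 t)] [∀ t, Fintype (Y2 t)]
    (T : ℕ) (S : Sys X U1 U2 W V1 V2 Y1 Y2) (P : PrimPMF X W V1 V2)
    (g : Strat U1 U2 Y1 Y2) (ψ : ∀ t, M2 Y2 U2 t → (X t → ℝ) → U1 t)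
    (hcompat : Compat S g ψ P T) :
    (∀ t, t ≤ T → ∀ ω : ΩT X W V1 V2 T, 0 < mass P T ω →
      condExp (mass P T)
        (fun ω' => S.c t (xTraj S g (toPrim T ω') t) (u1Traj S g (toPrim T ω') t)
          (u2Traj S g (toPrim T ω') t))
        (fun ω' => m1Traj S g (toPrim T ω') t = m1Traj S g (toPrim T ω) t ∧
          u1Traj S g (toPrim T ω') t = u1Traj S g (toPrim T ω) t ∧
          u2Traj S g (toPrim T ω') t = u2Traj S g (toPrim T ω) t) =
      ∑ x, S.c t x (u1Traj S g (toPrim T ω) t) (u2Traj S g (toPrim T ω) t) *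
        infoState1 S g P T ω t x) ∧
    (∃ ctil2 : ∀ t, (X t × Lp Y1 U1 t → ℝ) → ((X t → ℝ) → U1 t) → U2 t → ℝ,
      ∀ t, t ≤ T → ∀ ω : ΩT X W V1 V2 T, 0 < mass P T ω →
        condExp (mass P T)
          (fun ω' => ∑ x, S.c t x (u1Traj S g (toPrim T ω') t)
            (u2Traj S g (toPrim T ω') t) * infoState1 S g P T ω' t x)
          (fun ω' => m2Traj S g (toPrim T ω') t = m2Traj S g (toPrim T ω) t ∧
            ψ t (m2Traj S g (toPrim T ω') t) = ψ t (m2Traj S g (toPrim T ω) t) ∧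
            u2Traj S g (toPrim T ω') t = u2Traj S g (toPrim T ω) t) =
        ctil2 t (infoState2 S g P T ω t) (ψ t (m2Traj S g (toPrim T ω) t))
          (u2Traj S g (toPrim T ω) t)) := by
  have h := conditional_costs_general T S P g ψ hcompat
  exact ⟨fun t ht ω hω => (h t ht ω hω).1, condCost2 S, fun t ht ω hω => (h t ht ω hω).2⟩

end

end NestedTeam
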